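/- arXiv:1909.12824 — 3 statements merged into one kernel-verified Lean document; each statement's English description precedes it below -/
import Mathlib

section
/- Let f : ℝ → ℂ be continuous and 2π-periodic and let λ ∈ ℂ with e^{2πλ} ≠ 1. Then the function u(t) = (1 − e^{−2πλ})^{−1} · ∫₀^{2π} e^{−λs} f(t−s) ds is differentiable, 2π-periodic, and satisfies u′(t) + λ u(t) = f(t) for all t ∈ ℝ. -/
/-!
The substitution `r = t - s` turns the convolution into
`e^{-λt} (G t - G (t - 2π))`, where `G` is the primitive `∫₀^t e^{λr} f r dr`. The fundamental
theorem of calculus and the product rule give it the derivative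
`-λ` times itself plus `f t - e^{-2πλ} f (t - 2π)`, and the periodicity of `f` makes the last
expression `(1 - e^{-2πλ}) f t`, which the prefactor normalizes to `f t`.
-/

open Real MeasureTheory

theorem conv_eq_primitive (f : ℝ → ℂ) (hf : Continuous f) (l : ℂ) (t : ℝ) :
    ∫ s in (0:ℝ)..(2 * π), Complex.exp (-(l * s)) * f (t - s) =
      Complex.exp (-(l * t)) * ((∫ r in (0:ℝ)..t, Complex.exp (l * r) * f r) -
        ∫ r in (0:ℝ)..(t - 2 * π), Complex.exp (l * r) * f r) := by
  have hg : Continuous fun r : ℝ => Complex.exp (l * r) * f r := by fun_prop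
  rw [intervalIntegral.integral_interval_sub_left (hg.intervalIntegrable _ _)
    (hg.intervalIntegrable _ _), ← intervalIntegral.integral_const_mul]
  have h := intervalIntegral.integral_comp_sub_left (a := 0) (b := 2 * π)
    (fun r : ℝ => Complex.exp (-(l * t)) * (Complex.exp (l * r) * f r)) t
  rw [sub_zero] at h
  rw [← h]
  congr 1
  ext s
  rw [← mul_assoc, ← Complex.exp_add]
  congr 2
  push_cast
  ring

theorem hasDerivAt_conv (f : ℝ → ℂ) (hf : Continuous f) (hfper : Function.Periodic f (2 * π))
    (l : ℂ) (t : ℝ) :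
    HasDerivAt (fun t : ℝ => ∫ s in (0:ℝ)..(2 * π), Complex.exp (-(l * s)) * f (t - s))
      (-l * (∫ s in (0:ℝ)..(2 * π), Complex.exp (-(l * s)) * f (t - s)) +
        (1 - Complex.exp (-(2 * π * l))) * f t) t := by
  have hg : Continuous fun r : ℝ => Complex.exp (l * r) * f r := by fun_prop
  have hG (x : ℝ) : HasDerivAt (fun t : ℝ => ∫ r in (0:ℝ)..t, Complex.exp (l * r) * f r)
      (Complex.exp (l * x) * f x) x := hg.integral_hasStrictDerivAt 0 x |>.hasDerivAt
  have hE : HasDerivAt (fun t : ℝ => Complex.exp (-(l * t)))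
      (Complex.exp (-(l * t)) * -(l * 1)) t :=
    (((hasDerivAt_id t).ofReal_comp.const_mul l).neg).cexp
  have h := hE.mul ((hG t).sub ((hG (t - 2 * π)).comp_sub_const t (2 * π)))
  simp only [conv_eq_primitive f hf l]
  refine h.congr_deriv ?_
  have e1 : Complex.exp (-(l * t)) * Complex.exp (l * t) = 1 := by
    rw [← Complex.exp_add]; simp
  have e2 : Complex.exp (-(l * t)) * Complex.exp (l * (t - 2 * π : ℝ)) =
      Complex.exp (-(2 * π * l)) := by
    rw [← Complex.exp_add]
    congr 1
    push_cast
    ring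
  rw [hfper.sub_eq]
  simp only [Pi.sub_apply]
  linear_combination f t * e1 - f t * e2

theorem stmt_1 (f : ℝ → ℂ) (hf : Continuous f) (hfper : Function.Periodic f (2 * π))
    (l : ℂ) (hl : Complex.exp (2 * π * l) ≠ 1)
    (u : ℝ → ℂ)
    (hu : ∀ t : ℝ, u t = (1 - Complex.exp (-(2 * π * l)))⁻¹ *
      ∫ s in (0:ℝ)..(2 * π), Complex.exp (-(l * s)) * f (t - s)) :
    Differentiable ℝ u ∧ Function.Periodic u (2 * π) ∧
      ∀ t : ℝ, deriv u t + l * u t = f t := by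
  have hc : 1 - Complex.exp (-(2 * π * l)) ≠ 0 := by
    rw [Complex.exp_neg, sub_ne_zero]
    exact fun h => hl (inv_eq_one.mp h.symm)
  have hd (t : ℝ) : HasDerivAt u (-l * u t + f t) t := by
    have h := (hasDerivAt_conv f hf hfper l t).const_mul (1 - Complex.exp (-(2 * π * l)))⁻¹
    rw [funext hu]
    refine h.congr_deriv ?_
    rw [mul_add, inv_mul_cancel_left₀ hc]
    ring
  refine ⟨fun t => (hd t).differentiableAt, fun t => ?_, fun t => ?_⟩
  · simp only [hu, add_sub_right_comm, hfper _]
  · rw [(hd t).deriv]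
    ring
end

section
/- Let a : ℝ → ℝ be smooth and 2π-periodic, set a₀ = (1/(2π)) ∫₀^{2π} a(s) ds and H(t,s) = ∫_{t−s}^{t} a(θ) dθ. Let f : ℝ → ℂ be smooth and 2π-periodic and let m ∈ ℝ with e^{2πi m a₀} ≠ 1. Then the function u(t) = (1 − e^{−2πi m a₀})^{−1} · ∫₀^{2π} e^{−i m H(t,s)} f(t−s) ds is differentiable, 2π-periodic, and satisfies u′(t) + i m a(t) u(t) = f(t) for all t ∈ ℝ. -/
/-!
The formula for `u` is variation of constants in disguise. With `A t = ∫₀ᵗ a` and the integrating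
factor `E t = exp (i m A t)`, one has `H t s = A t - A (t - s)`, so the integrand equals
`(E t)⁻¹ * (E f) (t - s)`, and substituting `t - s` gives
`u t = c * (E t)⁻¹ * ∫ x in (t - 2π)..t, E x * f x` with `c = (1 - q)⁻¹`, `q = exp (-2πi m a₀)`.
Differentiating the first factor yields `-i m a u`. Since `A (t - 2π) = A t - 2π a₀`, the boundary
terms of the integral contribute `c * (E t)⁻¹ * (1 - q) * E t * f t = f t`.
Periodicity is visible from the original formula, because `H` and `f` are periodic in `t`.
-/

open Real MeasureTheory

theorem stmt_11 (a : ℝ → ℝ) (ha : ContDiff ℝ (⊤ : ℕ∞) a)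
    (haper : Function.Periodic a (2 * π))
    (a₀ : ℝ) (ha₀ : a₀ = (1 / (2 * π)) * ∫ s in (0:ℝ)..(2 * π), a s)
    (H : ℝ → ℝ → ℝ) (hH : ∀ t s : ℝ, H t s = ∫ θ in (t - s)..t, a θ)
    (f : ℝ → ℂ) (hf : ContDiff ℝ (⊤ : ℕ∞) f) (hfper : Function.Periodic f (2 * π))
    (m : ℝ) (hm : Complex.exp (2 * π * Complex.I * m * a₀) ≠ 1)
    (u : ℝ → ℂ)
    (hu : ∀ t : ℝ, u t = (1 - Complex.exp (-(2 * π * Complex.I * m * a₀)))⁻¹ *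
      ∫ s in (0:ℝ)..(2 * π), Complex.exp (-(Complex.I * m * H t s)) * f (t - s)) :
    Differentiable ℝ u ∧ Function.Periodic u (2 * π) ∧
      ∀ t : ℝ, deriv u t + Complex.I * m * a t * u t = f t := by
  have hac : Continuous a := ha.continuous
  have hfc : Continuous f := hf.continuous
  have hai : ∀ x y : ℝ, IntervalIntegrable a volume x y := fun x y => hac.intervalIntegrable x y
  have hper : Function.Periodic u (2 * π) := by
    intro t
    rw [hu, hu]
    congr 1
    refine intervalIntegral.integral_congr fun s _ => ?_
    have h1 : H (t + 2 * π) s = H t s := by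
      rw [hH, hH, show t + 2 * π - s = t - s + 2 * π by ring,
        ← intervalIntegral.integral_comp_add_right]
      exact intervalIntegral.integral_congr fun x _ => haper x
    have h2 : f (t + 2 * π - s) = f (t - s) := by
      rw [show t + 2 * π - s = t - s + 2 * π by ring, hfper]
    simp only [h1, h2]
  set q : ℂ := Complex.exp (-(2 * π * Complex.I * m * a₀)) with hq
  have hq1 : 1 - q ≠ 0 := by
    intro h
    apply hm
    have h' : q = 1 := (sub_eq_zero.mp h).symm
    rw [hq, Complex.exp_neg, inv_eq_one] at h'
    exact h'
  let A : ℝ → ℝ := fun t => ∫ θ in (0:ℝ)..t, a θ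
  have hA : ∀ t, HasDerivAt A (a t) t := fun t => hac.integral_hasStrictDerivAt 0 t |>.hasDerivAt
  have hHA : ∀ t s, H t s = A t - A (t - s) := fun t s => by
    rw [hH]
    exact (intervalIntegral.integral_interval_sub_left (hai _ _) (hai _ _)).symm
  have hAper : ∀ t, A (t - 2 * π) = A t - 2 * π * a₀ := fun t => by
    have h1 := hHA t (2 * π)
    have h2 := haper.intervalIntegral_add_eq (t - 2 * π) 0
    rw [sub_add_cancel, zero_add, ← hH] at h2
    have h3 : 2 * π * a₀ = ∫ s in (0:ℝ)..(2 * π), a s := by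
      rw [ha₀]; field_simp
    linarith
  let g : ℝ → ℂ := fun t => Complex.exp (Complex.I * m * A t) * f t
  have hAc : Continuous A := continuous_iff_continuousAt.mpr fun t => (hA t).continuousAt
  have hgc : Continuous g := by fun_prop
  have hgper : ∀ t, g (t - 2 * π) = q * g t := fun t => by
    simp only [g, hAper, hfper.sub_eq, hq]
    rw [← mul_assoc, ← Complex.exp_add]
    push_cast
    ring_nf
  let G : ℝ → ℂ := fun t => ∫ x in (0:ℝ)..t, g x
  have hG : ∀ t, HasDerivAt G (g t) t := fun t => hgc.integral_hasStrictDerivAt 0 t |>.hasDerivAt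
  have huG : ∀ t, u t =
      (1 - q)⁻¹ * (Complex.exp (-(Complex.I * m * A t)) * (G t - G (t - 2 * π))) := fun t => by
    have h1 : G t - G (t - 2 * π) = ∫ s in (0:ℝ)..(2 * π), g (t - s) := by
      rw [intervalIntegral.integral_comp_sub_left g t, sub_zero]
      exact intervalIntegral.integral_interval_sub_left
        (hgc.intervalIntegrable _ _) (hgc.intervalIntegrable _ _)
    rw [hu, h1, ← intervalIntegral.integral_const_mul (Complex.exp (-(Complex.I * m * A t)))]
    congr 1
    refine intervalIntegral.integral_congr fun s _ => ?_
    simp only [g, hHA]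
    rw [← mul_assoc, ← Complex.exp_add]
    push_cast
    ring_nf
  have hderiv : ∀ t, HasDerivAt u (f t - Complex.I * m * a t * u t) t := fun t => by
    have hE : HasDerivAt (fun t => Complex.exp (-(Complex.I * m * A t)))
        (Complex.exp (-(Complex.I * m * A t)) * -(Complex.I * m * a t)) t :=
      (((hA t).ofReal_comp.const_mul (Complex.I * m)).neg).cexp
    have hG' : HasDerivAt (fun t => G t - G (t - 2 * π)) (g t - g (t - 2 * π)) t :=
      (hG t).sub ((hG (t - 2 * π)).comp_sub_const t (2 * π))
    have h := (hE.mul hG').const_mul (1 - q)⁻¹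
    refine (h.congr_deriv ?_).congr_of_eventuallyEq (.of_forall huG)
    have hEg : Complex.exp (-(Complex.I * m * A t)) * g t = f t := by
      simp only [g]
      rw [← mul_assoc, ← Complex.exp_add, neg_add_cancel, Complex.exp_zero, one_mul]
    rw [huG, hgper, ← hEg]
    field_simp
    ring
  refine ⟨fun t => (hderiv t).differentiableAt, hper, fun t => ?_⟩
  rw [(hderiv t).deriv]
  ring
end

section
/- Let a : ℝ → ℝ be smooth and 2π-periodic, set a₀ = (1/(2π)) ∫₀^{2π} a(s) ds and H(t,t) = ∫₀^{t} a(θ) dθ. Let f : ℝ → ℂ be smooth and 2π·periodic, and let m ∈ ℝ with m a₀ ∈ ℤ. If ∫₀^{2π} e^{i m H(t,t)} f(t) dt = 0, then the function u(t) = e^{−i m H(t,t)} · ∫₀^{t} e^{i m H(s,s)} f(s) ds is differentiable, 2π-periodic, and satisfies u′(t) + i m a(t) u(t) = f(t) for all t ∈ ℝ. -/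
/-!
With `E t = exp (i m H t)`, the function `u` is `E⁻¹` times the primitive `G` of `E f`, so the
differential equation follows from the fundamental theorem of calculus and the product rule.
For periodicity, a primitive of a `T`-periodic function changes over one period by its integral
over `[0, T]`. Hence `H (t + 2π) = H t + 2π a₀`, and `m a₀ ∈ ℤ` makes `E` periodic. Then `E f` is
periodic as well, with vanishing integral over `[0, 2π]` by the compatibility condition, so `G` is
periodic and therefore `u` is.
-/

open Real MeasureTheory

theorem primitive_add_period {E : Type*} [NormedAddCommGroup E] [NormedSpace ℝ E]
    {g : ℝ → E} {T : ℝ} (hg : Continuous g) (hper : Function.Periodic g T) (t : ℝ) :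
    (∫ s in (0:ℝ)..(t + T), g s) = (∫ s in (0:ℝ)..t, g s) + ∫ s in (0:ℝ)..T, g s := by
  rw [← intervalIntegral.integral_add_adjacent_intervals
    (hg.intervalIntegrable 0 t) (hg.intervalIntegrable t (t + T)),
    hper.intervalIntegral_add_eq t 0, zero_add]

theorem stmt_12 (a : ℝ → ℝ) (ha : ContDiff ℝ (⊤ : ℕ∞) a)
    (haper : Function.Periodic a (2 * π))
    (a₀ : ℝ) (ha₀ : a₀ = (1 / (2 * π)) * ∫ s in (0:ℝ)..(2 * π), a s)
    (H : ℝ → ℝ) (hH : ∀ t : ℝ, H t = ∫ θ in (0:ℝ)..t, a θ)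
    (f : ℝ → ℂ) (hf : ContDiff ℝ (⊤ : ℕ∞) f) (hfper : Function.Periodic f (2 * π))
    (m : ℝ) (hm : ∃ k : ℤ, m * a₀ = (k : ℝ))
    (hcomp : (∫ t in (0:ℝ)..(2 * π), Complex.exp (Complex.I * m * H t) * f t) = 0)
    (u : ℝ → ℂ)
    (hu : ∀ t : ℝ, u t = Complex.exp (-(Complex.I * m * H t)) *
      ∫ s in (0:ℝ)..t, Complex.exp (Complex.I * m * H s) * f s) :
    Differentiable ℝ u ∧ Function.Periodic u (2 * π) ∧
      ∀ t : ℝ, deriv u t + Complex.I * m * a t * u t = f t := by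
  have hHd : ∀ t, HasDerivAt H (a t) t := fun t => by
    rw [funext hH]
    exact ha.continuous.integral_hasStrictDerivAt 0 t |>.hasDerivAt
  have hHc : Continuous H := continuous_iff_continuousAt.2 fun t => (hHd t).continuousAt
  have hgc : Continuous fun s : ℝ => Complex.exp (Complex.I * m * H s) * f s := by
    have := hf.continuous
    fun_prop
  have hud : ∀ t, HasDerivAt u (f t - Complex.I * m * a t * u t) t := fun t => by
    have hE : HasDerivAt (fun s : ℝ => Complex.exp (-(Complex.I * m * H s)))
        (Complex.exp (-(Complex.I * m * H t)) * -(Complex.I * m * a t)) t :=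
      (((hHd t).ofReal_comp.const_mul (Complex.I * m)).neg).cexp
    have hG := (hgc.integral_hasStrictDerivAt 0 t).hasDerivAt
    have hp := hE.mul hG
    have hcancel : Complex.exp (-(Complex.I * m * H t)) * Complex.exp (Complex.I * m * H t) = 1 := by
      rw [← Complex.exp_add, neg_add_cancel, Complex.exp_zero]
    have hfun : u = _ := funext hu
    rw [hfun]
    refine hp.congr_deriv ?_
    linear_combination f t * hcancel
  have hHper : ∀ t, H (t + 2 * π) = H t + 2 * π * a₀ := fun t => by
    have hpi := Real.pi_ne_zero
    rw [hH, hH, primitive_add_period ha.continuous haper, ha₀]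
    field_simp
  obtain ⟨k, hk⟩ := hm
  have hEper : ∀ t, Complex.exp (Complex.I * m * H (t + 2 * π)) =
      Complex.exp (Complex.I * m * H t) := fun t => by
    have hkC : (m : ℂ) * a₀ = k := by exact_mod_cast hk
    rw [hHper, Complex.exp_eq_exp_iff_exists_int]
    refine ⟨k, ?_⟩
    push_cast
    linear_combination 2 * π * Complex.I * hkC
  have hgper : Function.Periodic
      (fun s : ℝ => Complex.exp (Complex.I * m * H s) * f s) (2 * π) := fun t => by
    simp only [hEper, hfper t]
  refine ⟨fun t => (hud t).differentiableAt, fun t => ?_, fun t => ?_⟩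
  · rw [hu, hu, primitive_add_period hgc hgper, hcomp, add_zero, Complex.exp_neg, hEper,
      ← Complex.exp_neg]
  · rw [(hud t).deriv, sub_add_cancel]
end
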